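/- Let M be an acyclic module over a finite alphabet Λ with input set I of size k and node set S, let ω : I → S be total, and let F = ↻_ω M. Define A(k,1) = |Λ|^k and, for c > 1, A(k,c) = |Λ|^{k·c} − Σ_{c' | c, c' < c} A(k,c'). Then for every c ≥ 1, the number of attractors of size c of F is at most A(k,c). -/

import Mathlib

/-- A module over alphabet `Λ` with node set `S` and input set `I`:
a family of local functions `f s : Λ^S → Λ^I → Λ`. -/
structure AModule (Λ S I : Type) where
  f : S → (S → Λ) → (I → Λ) → Λ

namespace AModule

variable {Λ S I : Type}

/-- One-step update `M(x,i)`. -/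
def upd (M : AModule Λ S I) (x : S → Λ) (i : I → Λ) : S → Λ :=
  fun s => M.f s x i

/-- Iterated update `M(x,(i_1,…,i_m))`, defined by
`M(x,∅) = x` and `M(x,(i_1,…,i_m)) = M(M(x,i_1),(i_2,…,i_m))`. -/
def seqUpd (M : AModule Λ S I) (x : S → Λ) {m : ℕ} (J : Fin m → I → Λ) : S → Λ :=
  (List.ofFn J).foldl M.upd x

/-- Node `s` influences node `s'`: two configurations over `S ∪ I` differing
exactly at `s` (so with the same input part) on which `f_{s'}` differs. -/
def Influences (M : AModule Λ S I) (s s' : S) : Prop :=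
  ∃ (x x' : S → Λ) (i : I → Λ),
    (∀ r, r ≠ s → x r = x' r) ∧ x s ≠ x' s ∧ M.f s' x i ≠ M.f s' x' i

/-- `M` is acyclic: its interaction digraph has no directed cycle. -/
def Acyclic (M : AModule Λ S I) : Prop :=
  ∀ s, ¬ Relation.TransGen M.Influences s s

/-- `O` is an output function of delay `m` for node `s`. -/
def IsOutputFn (M : AModule Λ S I) (s : S) {m : ℕ}
    (O : (Fin m → I → Λ) → Λ) : Prop :=
  ∀ (x : S → Λ) (J : Fin m → I → Λ), M.seqUpd x J s = O J

/-- The set of delays `m ≥ 1` for which `s` admits an output function. -/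
def delaySet (M : AModule Λ S I) (s : S) : Set ℕ :=
  {m | 1 ≤ m ∧ ∃ O : (Fin m → I → Λ) → Λ, M.IsOutputFn s O}

/-- The complete recursive wiring `↻_ω M` as a map on configurations:
`F(x)_s = f_s(x, (x_{ω(α)})_{α ∈ I})`. -/
def wireF (M : AModule Λ S I) (ω : I → S) : (S → Λ) → (S → Λ) :=
  fun x => M.upd x (fun α => x (ω α))

/-- The input sequence of length `k` generated by `x`:
`Ĵ(x)^k_ℓ = F^{ℓ-1}(x)|_{ω(I)}`. -/
def genSeq (M : AModule Λ S I) (ω : I → S) (x : S → Λ) (k : ℕ) :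
    Fin k → I → Λ :=
  fun ℓ α => (M.wireF ω)^[ℓ.val] x (ω α)

end AModule

/-- An attractor of size `c` of the parallel map `F`: the (finite) periodic
orbit of a configuration whose minimal period is `c`. -/
def IsAttractor {Λ S : Type} (F : (S → Λ) → (S → Λ)) (c : ℕ)
    (X : Set (S → Λ)) : Prop :=
  ∃ x : S → Λ, Function.minimalPeriod F x = c ∧ X = {y | ∃ j : ℕ, y = F^[j] x}

/-- `A(k,1) = N^k` and `A(k,c) = N^{k·c} − Σ_{c' | c, c' < c} A(k,c')`. -/
def Abound (N k : ℕ) : ℕ → ℤ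
  | c =>
    if c = 1 then (N : ℤ) ^ k
    else (N : ℤ) ^ (k * c) - ∑ c' ∈ c.properDivisors.attach, Abound N k c'.1
termination_by c => c
decreasing_by exact (Nat.mem_properDivisors.mp c'.2).2

open Function in
theorem AModule.f_congr {Λ S I : Type} [Fintype S] (M : AModule Λ S I) (s : S)
    (x y : S → Λ) (i : I → Λ) (h : ∀ r, M.Influences r s → x r = y r) :
    M.f s x i = M.f s y i := by
  classical
  have key : ∀ D : Finset S, M.f s (D.piecewise x y) i = M.f s y i := by
    intro D
    induction D using Finset.induction_on with
    | empty => simp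
    | insert a D ha ih =>
      rw [← ih]
      by_contra hne
      have hxy : x a ≠ y a := by
        intro he
        apply hne
        congr 1
        funext r
        by_cases hr : r = a
        · subst hr; simp [ha, he]
        · simp [Finset.piecewise, hr]
      apply hxy
      apply h
      refine ⟨_, _, i, ?_, ?_, hne⟩
      · intro r hr
        simp [Finset.piecewise, hr]
      · simpa [ha] using hxy
  simpa using key Finset.univ

/-- The shift on sequences. -/
def seqShift {β : Type} (u : ℕ → β) : ℕ → β := fun n => u (n + 1)

theorem seqShift_iterate {β : Type} (c : ℕ) (u : ℕ → β) (n : ℕ) :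
    seqShift^[c] u n = u (n + c) := by
  induction c generalizing u n with
  | zero => rfl
  | succ c ih =>
    rw [Function.iterate_succ_apply, ih]
    simp only [seqShift]
    congr 1

/-- The periodic sequences are words. -/
def perEquiv {β : Type} (c : ℕ) (hc : 1 ≤ c) :
    {u : ℕ → β | Function.IsPeriodicPt seqShift c u} ≃ (Fin c → β) where
  toFun u := fun i => u.1 i
  invFun v := ⟨fun n => v ⟨n % c, Nat.mod_lt _ hc⟩, by
    change seqShift^[c] _ = _
    funext n
    rw [seqShift_iterate]
    simp⟩
  left_inv u := by
    obtain ⟨u, hu⟩ := u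
    apply Subtype.ext
    funext n
    have hp : Function.Periodic u c := by
      intro n
      rw [← seqShift_iterate c u n]
      exact congrFun hu n
    exact hp.map_mod_nat n
  right_inv v := by
    funext i
    simp [Nat.mod_eq_of_lt i.2]

theorem per_finite {β : Type} [Finite β] (c : ℕ) (hc : 1 ≤ c) :
    {u : ℕ → β | Function.IsPeriodicPt seqShift c u}.Finite :=
  Finite.of_equiv _ (perEquiv c hc).symm

theorem per_sum {β : Type} [Finite β] (c : ℕ) (hc : 1 ≤ c) :
    Nat.card β ^ c =
      ∑ d ∈ c.divisors, {u : ℕ → β | Function.minimalPeriod seqShift u = d}.ncard := by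
  classical
  have hcard : (per_finite (β := β) c hc).toFinset.card = Nat.card β ^ c := by
    rw [← Set.ncard_eq_toFinset_card _ (per_finite (β := β) c hc), ← Nat.card_coe_set_eq, Nat.card_congr (perEquiv c hc),
      Nat.card_fun, Nat.card_fin]
  rw [← hcard, Finset.card_eq_sum_card_fiberwise (f := Function.minimalPeriod seqShift)
    (t := c.divisors)]
  · refine Finset.sum_congr rfl fun d hd => ?_
    rw [← Set.ncard_coe_finset]
    congr 1
    ext u
    simp only [Finset.coe_filter, Set.Finite.mem_toFinset, Set.mem_ofPred_eq, and_iff_right_iff_imp]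
    intro h
    rw [Function.isPeriodicPt_iff_minimalPeriod_dvd, h]
    exact Nat.dvd_of_mem_divisors hd
  · intro u hu
    have hu' : Function.IsPeriodicPt seqShift c u := by simpa using hu
    simp only [Finset.mem_coe, Nat.mem_divisors]
    exact ⟨hu'.minimalPeriod_dvd, by omega⟩

theorem abound_eq {β : Type} [Finite β] (N k : ℕ) (hN : Nat.card β = N ^ k) (c : ℕ)
    (hc : 1 ≤ c) :
    Abound N k c = ({u : ℕ → β | Function.minimalPeriod seqShift u = c}.ncard : ℤ) := by
  induction c using Nat.strong_induction_on with
  | _ c ih =>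
    have hs := per_sum (β := β) c hc
    rw [← Nat.cons_self_properDivisors (by omega), Finset.sum_cons, hN] at hs
    rw [Abound]
    split_ifs with h1
    · subst h1
      rw [Nat.properDivisors_one, Finset.sum_empty, add_zero, pow_one] at hs
      rw [← hs]; push_cast; rfl
    · rw [Finset.sum_attach c.properDivisors (fun d => Abound N k d)]
      have : ∑ d ∈ c.properDivisors, Abound N k d = ∑ d ∈ c.properDivisors,
          ({u : ℕ → β | Function.minimalPeriod seqShift u = d}.ncard : ℤ) := by
        refine Finset.sum_congr rfl fun d hd => ih d (Nat.mem_properDivisors.mp hd).2 ?_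
        exact Nat.pos_of_mem_properDivisors hd
      rw [this, pow_mul]
      have hs' := congrArg (Nat.cast : ℕ → ℤ) hs
      push_cast at hs'
      rw [hs']; ring

/-- The sequence of inputs generated by `x`. -/
def inSeq {Λ S I : Type} (M : AModule Λ S I) (ω : I → S) (x : S → Λ) : ℕ → I → Λ :=
  fun n α => (M.wireF ω)^[n] x (ω α)

theorem inSeq_iterate {Λ S I : Type} (M : AModule Λ S I) (ω : I → S) (x : S → Λ) (c : ℕ) :
    inSeq M ω ((M.wireF ω)^[c] x) = seqShift^[c] (inSeq M ω x) := by
  funext n α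
  rw [seqShift_iterate]
  simp only [inSeq, ← Function.iterate_add_apply]

theorem inSeq_inj {Λ S I : Type} [Fintype S] (M : AModule Λ S I) (hM : M.Acyclic) (ω : I → S)
    (p : ℕ) (hp : 1 ≤ p) (x y : S → Λ)
    (hx : Function.IsPeriodicPt (M.wireF ω) p x) (hy : Function.IsPeriodicPt (M.wireF ω) p y)
    (h : inSeq M ω x = inSeq M ω y) : x = y := by
  have : Std.Irrefl (Relation.TransGen M.Influences) := ⟨hM⟩
  have wf : WellFounded (Relation.TransGen M.Influences) :=
    Finite.wellFounded_of_trans_of_irrefl _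
  funext s
  induction s using wf.induction generalizing x y with
  | _ s ih =>
    obtain ⟨q, rfl⟩ : ∃ q, p = q + 1 := ⟨p - 1, by omega⟩
    have hx' : M.wireF ω ((M.wireF ω)^[q] x) = x := by
      rw [← Function.iterate_succ_apply' (M.wireF ω)]; exact hx
    have hy' : M.wireF ω ((M.wireF ω)^[q] y) = y := by
      rw [← Function.iterate_succ_apply' (M.wireF ω)]; exact hy
    have hg : inSeq M ω ((M.wireF ω)^[q] x) = inSeq M ω ((M.wireF ω)^[q] y) := by
      rw [inSeq_iterate, inSeq_iterate, h]
    rw [← hx', ← hy']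
    have h0 := congrFun hg 0
    change M.f s _ (inSeq M ω ((M.wireF ω)^[q] x) 0) = M.f s _ (inSeq M ω ((M.wireF ω)^[q] y) 0)
    rw [h0]
    apply M.f_congr
    intro r hr
    exact ih r (Relation.TransGen.single hr) _ _ (hx.apply_iterate q) (hy.apply_iterate q) hg

/-- the number of attractors of size `c` of the complete
recursive wiring of an acyclic module with `k` inputs is at most `A(k,c)`. -/
theorem statement8 {Λ S I : Type} [Fintype Λ] [Fintype S] [Fintype I]
    (hΛ : 2 ≤ Fintype.card Λ) (k : ℕ) (hk : Fintype.card I = k)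
    (M : AModule Λ S I) (hM : M.Acyclic) (ω : I → S)
    (c : ℕ) (hc : 1 ≤ c) :
    (Nat.card {X : Set (S → Λ) // IsAttractor (M.wireF ω) c X} : ℤ) ≤
      Abound (Fintype.card Λ) k c := by
  classical
  have hcard : Nat.card (I → Λ) = Fintype.card Λ ^ k := by
    rw [Nat.card_fun, Nat.card_eq_fintype_card, Nat.card_eq_fintype_card, hk]
  rw [abound_eq (β := I → Λ) _ _ hcard c hc]
  have hfin : {u : ℕ → I → Λ | Function.minimalPeriod seqShift u = c}.Finite :=
    (per_finite c hc).subset fun u hu => by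
      simp only [Set.mem_ofPred_eq] at hu ⊢
      rw [← hu]; exact Function.isPeriodicPt_minimalPeriod _ _
  have hF : Finite {u : ℕ → I → Λ | Function.minimalPeriod seqShift u = c} := hfin
  rw [← Nat.card_coe_set_eq]
  norm_cast
  have hper : ∀ X : {X : Set (S → Λ) // IsAttractor (M.wireF ω) c X},
      Function.IsPeriodicPt (M.wireF ω) c X.2.choose := by
    intro X
    have := Function.isPeriodicPt_minimalPeriod (M.wireF ω) X.2.choose
    rwa [X.2.choose_spec.1] at this
  refine Nat.card_le_card_of_injective
    (fun X => ⟨inSeq M ω X.2.choose, ?_⟩) ?_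
  · have hX := X.2.choose_spec.1
    have hp := hper X
    generalize X.2.choose = x at hX hp
    change Function.minimalPeriod _ _ = c
    apply Nat.dvd_antisymm
    · apply Function.IsPeriodicPt.minimalPeriod_dvd
      change seqShift^[c] _ = _
      rw [← inSeq_iterate, hp.eq]
    · rw [← hX]
      apply Function.IsPeriodicPt.minimalPeriod_dvd
      change (M.wireF ω)^[_] x = x
      apply inSeq_inj M hM ω c hc _ _ (hp.apply_iterate _) hp
      rw [inSeq_iterate]
      exact Function.isPeriodicPt_minimalPeriod _ _
  · intro X Y hXY
    have he := inSeq_inj M hM ω c hc _ _ (hper X) (hper Y) (congrArg Subtype.val hXY)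
    apply Subtype.ext
    rw [X.2.choose_spec.2, Y.2.choose_spec.2, he]
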